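/- Let Y be a normed space, let M ≥ 1 and n ≥ 0 be integers, and let A_1, …, A_M be subsets of Y. Then the Kolmogorov widths satisfy d_{Mn}(A_1 ∪ ⋯ ∪ A_M)_Y ≤ max_{1≤i≤M} d_n(A_i)_Y. -/

import Mathlib

/-- The Kolmogorov `n`-width of a subset `K` of a complex normed space `Y`:
the infimum over all `n`-dimensional subspaces `W` of `Y` of the deviation
`sup_{v ∈ K} inf_{w ∈ W} ‖v - w‖`. -/
noncomputable def kolWidth {Y : Type*} [NormedAddCommGroup Y] [NormedSpace ℂ Y]
    (n : ℕ) (K : Set Y) : ℝ :=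
  ⨅ W : {W : Submodule ℂ Y // Module.finrank ℂ ↥W = n},
    ⨆ x : K, ⨅ w : ↥W.1, ‖(x : Y) - (w : Y)‖

theorem kw_extend {Y : Type*} [NormedAddCommGroup Y] [NormedSpace ℂ Y] (m : ℕ)
    (h : FiniteDimensional ℂ Y → m ≤ Module.finrank ℂ Y) (d : ℕ) :
    ∀ V : Submodule ℂ Y, FiniteDimensional ℂ V → Module.finrank ℂ V + d = m →
      ∃ V' : Submodule ℂ Y, V ≤ V' ∧ FiniteDimensional ℂ V' ∧ Module.finrank ℂ V' = m := by
  induction d with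
  | zero => intro V hV hd; exact ⟨V, le_rfl, hV, by simpa using hd⟩
  | succ d ih =>
    intro V hV hd
    have hne : V ≠ ⊤ := by
      rintro rfl
      have hf : FiniteDimensional ℂ Y := Module.finite_def.2 (Module.Finite.iff_fg.1 hV)
      have := h hf
      rw [finrank_top] at hd
      omega
    obtain ⟨v, hv⟩ : ∃ v, v ∉ V := by
      by_contra hc
      push Not at hc
      exact hne (Submodule.eq_top_iff'.2 hc)
    have hv0 : v ≠ 0 := by rintro rfl; exact hv V.zero_mem
    have hinf : V ⊓ Submodule.span ℂ {v} = ⊥ :=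
      disjoint_iff.1 ((Submodule.disjoint_span_singleton' hv0).2 hv)
    have hs := Submodule.finrank_sup_add_finrank_inf_eq V (Submodule.span ℂ {v})
    rw [hinf, finrank_bot, finrank_span_singleton hv0] at hs
    obtain ⟨V', h1, h2, h3⟩ := ih (V ⊔ Submodule.span ℂ {v}) inferInstance (by omega)
    exact ⟨V', le_sup_left.trans h1, h2, h3⟩

theorem kw_inf_nonneg {Y : Type*} [NormedAddCommGroup Y] [NormedSpace ℂ Y]
    (W : Submodule ℂ Y) (x : Y) : 0 ≤ ⨅ w : W, ‖x - (w : Y)‖ :=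
  Real.iInf_nonneg fun _ => norm_nonneg _

theorem kw_inf_le {Y : Type*} [NormedAddCommGroup Y] [NormedSpace ℂ Y]
    (W : Submodule ℂ Y) (x : Y) (w : W) : ⨅ w : W, ‖x - (w : Y)‖ ≤ ‖x - w‖ :=
  ciInf_le ⟨0, by rintro _ ⟨w, rfl⟩; exact norm_nonneg _⟩ w

theorem kw_sup_nonneg {Y : Type*} [NormedAddCommGroup Y] [NormedSpace ℂ Y]
    (W : Submodule ℂ Y) (K : Set Y) : 0 ≤ ⨆ x : K, ⨅ w : W, ‖(x : Y) - (w : Y)‖ :=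
  Real.iSup_nonneg fun _ => kw_inf_nonneg _ _

theorem kw_nonneg {Y : Type*} [NormedAddCommGroup Y] [NormedSpace ℂ Y]
    (n : ℕ) (K : Set Y) : 0 ≤ kolWidth n K :=
  Real.iInf_nonneg fun W => kw_sup_nonneg W.1 K

theorem kw_le {Y : Type*} [NormedAddCommGroup Y] [NormedSpace ℂ Y]
    (n : ℕ) (K : Set Y) (W : Submodule ℂ Y) (hW : Module.finrank ℂ W = n) :
    kolWidth n K ≤ ⨆ x : K, ⨅ w : W, ‖(x : Y) - (w : Y)‖ :=
  ciInf_le (f := fun W : {W : Submodule ℂ Y // Module.finrank ℂ ↥W = n} =>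
    ⨆ x : K, ⨅ w : ↥W.1, ‖(x : Y) - (w : Y)‖)
    ⟨0, by rintro _ ⟨w, rfl⟩; exact kw_sup_nonneg _ _⟩ ⟨W, hW⟩

theorem kw_top {Y : Type*} [NormedAddCommGroup Y] [NormedSpace ℂ Y]
    (n : ℕ) (K : Set Y) (h : Module.finrank ℂ Y = n) : kolWidth n K ≤ 0 := by
  refine (kw_le n K ⊤ (by rw [finrank_top, h])).trans ?_
  refine Real.iSup_le (fun x => ?_) le_rfl
  exact (kw_inf_le ⊤ (x : Y) ⟨x, trivial⟩).trans (by simp)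

/-- If all deviations from `m`-dimensional subspaces are finite and the space has an
`m+1`-dimensional subspace then the set is bounded. -/
theorem kw_bounded {Y : Type*} [NormedAddCommGroup Y] [NormedSpace ℂ Y]
    (m : ℕ) (K : Set Y) (F : Submodule ℂ Y) [FiniteDimensional ℂ F]
    (hF : Module.finrank ℂ F = m + 1)
    (h : ∀ W : Submodule ℂ Y, Module.finrank ℂ W = m →
      BddAbove (Set.range fun x : K => ⨅ w : W, ‖(x : Y) - (w : Y)‖)) :
    ∃ C, ∀ x ∈ K, ‖x‖ ≤ C := by
  let b := Module.finBasisOfFinrankEq ℂ F hF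
  have key : ∀ j, ∃ C : ℝ, ∀ x ∈ K, ∃ p : F, b.coord j p = 0 ∧ ‖x - p‖ ≤ C := by
    intro j
    have hsurj : LinearMap.range (b.coord j) = ⊤ := by
      refine LinearMap.range_eq_top.2 fun c => ⟨c • b j, by simp⟩
    have hk := LinearMap.finrank_range_add_finrank_ker (b.coord j)
    rw [hsurj, finrank_top, Module.finrank_self, hF] at hk
    obtain ⟨C, hC⟩ := h ((LinearMap.ker (b.coord j)).map F.subtype) (by
      rw [Submodule.finrank_map_subtype_eq]
      omega)
    refine ⟨C + 1, fun x hx => ?_⟩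
    have h1 := hC ⟨⟨x, hx⟩, rfl⟩
    obtain ⟨⟨w, hw⟩, hw'⟩ := exists_lt_of_ciInf_lt (lt_of_le_of_lt h1 (lt_add_one C))
    obtain ⟨p, hp, rfl⟩ := hw
    exact ⟨p, hp, hw'.le⟩
  choose C hC using key
  let L : Fin (m + 1) → (F →L[ℂ] ℂ) := fun j => LinearMap.toContinuousLinearMap (b.coord j)
  refine ⟨C 0 + ∑ j, ‖L j‖ * (C 0 + C j) * ‖b j‖, fun x hx => ?_⟩
  obtain ⟨p, -, hp⟩ := hC 0 x hx
  have hpj : ∀ j, ‖b.coord j p‖ ≤ ‖L j‖ * (C 0 + C j) := by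
    intro j
    obtain ⟨q, hq, hq'⟩ := hC j x hx
    have e : b.coord j p = L j (p - q) := by
      change _ = b.coord j (p - q)
      rw [map_sub, hq, sub_zero]
    rw [e]
    refine ((L j).le_opNorm _).trans ?_
    gcongr
    calc ‖p - q‖ = ‖(x - q) - (x - p)‖ := by rw [sub_sub_sub_cancel_left]; rfl
      _ ≤ ‖x - q‖ + ‖x - p‖ := norm_sub_le _ _
      _ ≤ _ := by linarith
  have hpn : ‖p‖ ≤ ∑ j, ‖L j‖ * (C 0 + C j) * ‖b j‖ := by
    conv_lhs => rw [← b.sum_repr p]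
    refine (norm_sum_le _ _).trans (Finset.sum_le_sum fun j _ => ?_)
    rw [norm_smul]
    exact mul_le_mul_of_nonneg_right (hpj j) (norm_nonneg _)
  calc ‖x‖ = ‖(x - p) + p‖ := by rw [sub_add_cancel]
    _ ≤ ‖x - p‖ + ‖(p : Y)‖ := norm_add_le _ _
    _ ≤ _ := add_le_add hp hpn

/-- Kolmogorov widths of finite unions: for subsets `A_1, …, A_M` of a normed space `Y`
(`M ≥ 1`) and any `n ≥ 0`, `d_{M·n}(A_1 ∪ ⋯ ∪ A_M) ≤ max_{1 ≤ i ≤ M} d_n(A_i)`. -/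
theorem kolWidth_iUnion_le_max
    {Y : Type*} [NormedAddCommGroup Y] [NormedSpace ℂ Y]
    (M : ℕ) (hM : 1 ≤ M) (n : ℕ) (A : Fin M → Set Y) :
    kolWidth (M * n) (⋃ i, A i) ≤ ⨆ i : Fin M, kolWidth n (A i) := by
  have hR : 0 ≤ ⨆ i : Fin M, kolWidth n (A i) := Real.iSup_nonneg fun i => kw_nonneg _ _
  -- the space is small
  by_cases hsmall : FiniteDimensional ℂ Y ∧ Module.finrank ℂ Y ≤ M * n
  · obtain ⟨hfd, hle⟩ := hsmall
    rcases hle.eq_or_lt with he | hlt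
    · exact (kw_top _ _ he).trans hR
    · have : IsEmpty {W : Submodule ℂ Y // Module.finrank ℂ ↥W = M * n} :=
        ⟨fun W => by have := Submodule.finrank_le W.1; have := W.2; omega⟩
      rw [kolWidth, Real.iInf_of_isEmpty]
      exact hR
  have hbig : FiniteDimensional ℂ Y → M * n + 1 ≤ Module.finrank ℂ Y := by
    intro hf
    by_contra hc
    exact hsmall ⟨hf, by omega⟩
  by_cases hjunk : ¬ FiniteDimensional ℂ Y ∧ n = 0
  · obtain ⟨h1, rfl⟩ := hjunk
    exact (kw_top _ _ (by rw [Module.finrank_of_not_finite h1, mul_zero])).trans hR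
  have hfin : ∀ W : Submodule ℂ Y, Module.finrank ℂ W = n → FiniteDimensional ℂ W := by
    intro W hW
    by_cases hY : FiniteDimensional ℂ Y
    · infer_instance
    · refine Module.finite_of_finrank_pos ?_
      rcases Nat.eq_zero_or_pos n with h0 | h0
      · exact absurd ⟨hY, h0⟩ hjunk
      · omega
  -- unbounded deviation
  by_cases hub : ∀ W : Submodule ℂ Y, Module.finrank ℂ W = M * n →
      BddAbove (Set.range fun x : (⋃ i, A i : Set Y) => ⨅ w : W, ‖(x : Y) - (w : Y)‖)
  swap
  · push Not at hub
    obtain ⟨W, hW, hb⟩ := hub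
    refine (kw_le _ _ W hW).trans ?_
    rw [Real.iSup_of_not_bddAbove hb]
    exact hR
  obtain ⟨F, -, hFf, hF⟩ := kw_extend (M * n + 1) hbig (M * n + 1) (⊥ : Submodule ℂ Y)
    inferInstance (by simp)
  obtain ⟨C, hC⟩ := kw_bounded (M * n) _ F hF hub
  have hnM : n ≤ M * n := Nat.le_mul_of_pos_left n hM
  obtain ⟨W0, -, -, hW0⟩ := kw_extend n (fun hf => by have := hbig hf; omega) n
    (⊥ : Submodule ℂ Y) inferInstance (by simp)
  have : Nonempty {W : Submodule ℂ Y // Module.finrank ℂ ↥W = n} := ⟨⟨W0, hW0⟩⟩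
  refine le_of_forall_pos_le_add fun ε hε => ?_
  have hch : ∀ i, ∃ W : Submodule ℂ Y, Module.finrank ℂ W = n ∧
      (⨆ x : A i, ⨅ w : W, ‖(x : Y) - (w : Y)‖) < kolWidth n (A i) + ε := by
    intro i
    obtain ⟨W, hW⟩ := exists_lt_of_ciInf_lt (lt_add_of_pos_right (kolWidth n (A i)) hε)
    exact ⟨W.1, W.2, hW⟩
  choose W hWn hWd using hch
  have hWf : ∀ i, FiniteDimensional ℂ (W i) := fun i => hfin _ (hWn i)
  have hrank : Module.finrank ℂ (⨆ i, W i : Submodule ℂ Y) ≤ M * n := by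
    have hs : ∀ s : Finset (Fin M), FiniteDimensional ℂ (s.sup W : Submodule ℂ Y) ∧
        Module.finrank ℂ (s.sup W : Submodule ℂ Y) ≤ s.card * n := by
      intro s
      induction s using Finset.induction_on with
      | empty =>
        rw [Finset.sup_empty]
        exact ⟨inferInstance, by simp⟩
      | insert a s ha ih =>
        obtain ⟨ih1, ih2⟩ := ih
        rw [Finset.sup_insert, Finset.card_insert_of_notMem ha]
        refine ⟨inferInstance, ?_⟩
        refine (Submodule.finrank_add_le_finrank_add_finrank _ _).trans ?_
        rw [hWn a, add_mul, one_mul]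
        omega
    have := (hs Finset.univ).2
    rwa [Finset.sup_univ_eq_iSup, Finset.card_univ, Fintype.card_fin] at this
  obtain ⟨V, hWV, -, hV⟩ := kw_extend (M * n) (fun hf => by have := hbig hf; omega)
    (M * n - Module.finrank ℂ (⨆ i, W i : Submodule ℂ Y)) (⨆ i, W i) inferInstance (by omega)
  refine (kw_le _ _ V hV).trans ?_
  refine Real.iSup_le ?_ (by positivity)
  rintro ⟨x, hx⟩
  obtain ⟨i, hi⟩ := Set.mem_iUnion.1 hx
  have s1 : (⨅ w : V, ‖x - (w : Y)‖) ≤ ⨅ w : W i, ‖x - (w : Y)‖ :=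
    le_ciInf fun w => kw_inf_le V x ⟨w, hWV (le_iSup W i w.2)⟩
  have s2 : (⨅ w : W i, ‖x - (w : Y)‖) ≤ ⨆ x : A i, ⨅ w : W i, ‖(x : Y) - (w : Y)‖ := by
    refine le_ciSup (f := fun x : A i => ⨅ w : W i, ‖(x : Y) - (w : Y)‖) ⟨C, ?_⟩ ⟨x, hi⟩
    rintro _ ⟨y, rfl⟩
    refine (kw_inf_le (W i) (y : Y) 0).trans ?_
    simpa using hC y (Set.mem_iUnion.2 ⟨i, y.2⟩)
  have s3 : kolWidth n (A i) ≤ ⨆ i : Fin M, kolWidth n (A i) :=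
    le_ciSup (f := fun i => kolWidth n (A i)) (Set.finite_range _).bddAbove i
  have := hWd i
  change (⨅ w : V, ‖x - (w : Y)‖) ≤ _
  linarith
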